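/- Let H : Ω → S(m) be continuous on the open connected set Ω, with repeated eigenvalues λ_1(x) ≤ … ≤ λ_m(x) of multiplicities d_i(x), and define j_*(x) := min{ i : λ_i(x) = λ_j(x) } and j^*(x) := max{ i : λ_i(x) = λ_j(x) }. Then: (i) if the number of distinct eigenvalues s_m(x) = |{λ_1(x),…,λ_m(x)}| is constant on Ω, then every multiplicity function d_j is constant on Ω; (ii) if d_j is constant on Ω, then j_* and j^* are constant on Ω. -/

import Mathlib

/-!
The ordered eigenvalues of a real matrix with real spectrum depend continuously on the matrix: they
are bounded by the entries, and by closedness of `det (t - A) = ∏ i, (t - λ i)` every limit point is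
the ordered spectrum of the limit matrix. Hence eigenvalues which differ at `x₀` still differ near
`x₀`, so the partition of the indexes into groups of equal eigenvalues can only get finer near `x₀`.
If the number of groups is constant, or if the size of the group of `j` is, then this refinement is
locally trivial (on the group of `j`, in the second case), and connectedness makes the group of `j`
constant on all of `Ω`.

The projection `P j` has rank `d_j` and range inside the eigenspace of `λ_j`, so `λ_j` has algebraic
multiplicity at least `d_j`; as these numbers, summed over the distinct eigenvalues, already give
the degree `m`, the characteristic polynomial is `∏ i, (X - λ i)`.
-/

open scoped Classical

/-- Entrywise directional derivative `D_e H(x)` of a matrix-valued map. -/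
noncomputable def DH {E : Type*} [NormedAddCommGroup E] [NormedSpace ℝ E] {m : ℕ}
    (H : E → Matrix (Fin m) (Fin m) ℝ) (x e : E) : Matrix (Fin m) (Fin m) ℝ :=
  Matrix.of fun i k => fderiv ℝ (fun y => H y i k) x e

/-- Second-order directional derivative `D_b D_a H(x)` (first `a`, then `b`). -/
noncomputable def DH2 {E : Type*} [NormedAddCommGroup E] [NormedSpace ℝ E] {m : ℕ}
    (H : E → Matrix (Fin m) (Fin m) ℝ) (x a b : E) : Matrix (Fin m) (Fin m) ℝ :=
  Matrix.of fun i k => fderiv ℝ (fun y => DH H y a i k) x b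

/-- The pseudoinverse `A_j(x)` of `λ_j(x)I - H(x)`. -/
noncomputable def Amat {E : Type*} {m : ℕ} (lam : Fin m → E → ℝ)
    (P : Fin m → E → Matrix (Fin m) (Fin m) ℝ) (j : Fin m) (x : E) :
    Matrix (Fin m) (Fin m) ℝ :=
  ∑ i ∈ Finset.univ.filter (fun i => lam i x ≠ lam j x),
    (((Finset.univ.filter fun k => lam k x = lam i x).card : ℝ) * (lam j x - lam i x))⁻¹ • P i x

open Filter Finset Polynomial Topology

section LevelSets

variable {ι α β : Type*} [Fintype ι] [DecidableEq α] [DecidableEq β] {f : ι → α} {g : ι → β}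

lemma filter_eq_of_factorsThrough_of_card_le (hgf : g.FactorsThrough f) (j : ι)
    (hcard : #{i | g i = g j} ≤ #{i | f i = f j}) :
    univ.filter (fun i => f i = f j) = univ.filter fun i => g i = g j :=
  eq_of_subset_of_card_le (monotone_filter_right _ fun _ _ hi => hgf hi) hcard

lemma filter_eq_of_factorsThrough_of_card_image_le (hgf : g.FactorsThrough f)
    (hcard : #(univ.image f) ≤ #(univ.image g)) (j : ι) :
    univ.filter (fun i => f i = f j) = univ.filter fun i => g i = g j := by
  have : Nonempty β := ⟨g j⟩
  obtain ⟨e, rfl⟩ := (Function.factorsThrough_iff g).1 hgf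
  rw [← image_image] at hcard
  have he : Set.InjOn e (univ.image f) :=
    injOn_of_card_image_eq (card_image_le.antisymm hcard)
  exact filter_congr fun i _ => (he.eq_iff (mem_coe.2 (mem_image_of_mem f (mem_univ i)))
    (mem_coe.2 (mem_image_of_mem f (mem_univ j)))).symm

end LevelSets

section LocallyConstant

variable {X ι R : Type*}

lemma eventually_factorsThrough_of_tendsto [Finite ι] [TopologicalSpace R] [T2Space R]
    {l : Filter X} {f : X → ι → R} {f₀ : ι → R} (hf : Tendsto f l (𝓝 f₀)) :
    ∀ᶠ x in l, f₀.FactorsThrough (f x) := by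
  refine eventually_all.2 fun i => eventually_all.2 fun j => ?_
  by_cases hij : f₀ i = f₀ j
  · exact .of_forall fun _ _ => hij
  · have hlim := (tendsto_pi_nhds.1 hf i).prodMk_nhds (tendsto_pi_nhds.1 hf j)
    filter_upwards [hlim.eventually (isClosed_diagonal.isOpen_compl.mem_nhds hij)] with x hx hxij
    exact absurd hxij hx

variable [TopologicalSpace X] {s : Set X}

lemma exists_forall_eq_of_eventually_eq {α : Type*} [Nonempty α] (hs : IsPreconnected s)
    {F : X → α} (hF : ∀ x ∈ s, ∀ᶠ y in 𝓝[s] x, F y = F x) : ∃ c, ∀ x ∈ s, F x = c := by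
  let : TopologicalSpace α := ⊥
  have : DiscreteTopology α := ⟨rfl⟩
  have hcont : ContinuousOn F s := fun x hx =>
    tendsto_const_nhds.congr' ((hF x hx).mono fun _ hy => hy.symm)
  obtain rfl | ⟨x₀, hx₀⟩ := s.eq_empty_or_nonempty
  · simp
  · exact ⟨F x₀, fun x hx => hs.constant hcont hx hx₀⟩

variable [Fintype ι] [TopologicalSpace R] [T2Space R] [DecidableEq R] {f : X → ι → R}

lemma exists_filter_eq_of_card_filter_eq (hs : IsPreconnected s) (hf : ContinuousOn f s) (j : ι)
    {d : ℕ} (hd : ∀ x ∈ s, #{i | f x i = f x j} = d) :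
    ∃ I : Finset ι, ∀ x ∈ s, univ.filter (fun i => f x i = f x j) = I := by
  refine exists_forall_eq_of_eventually_eq hs fun x hx => ?_
  filter_upwards [eventually_factorsThrough_of_tendsto (hf x hx), self_mem_nhdsWithin]
    with y hxy hy
  exact filter_eq_of_factorsThrough_of_card_le hxy j ((hd x hx).trans (hd y hy).symm).le

lemma exists_filter_eq_of_card_image_eq (hs : IsPreconnected s) (hf : ContinuousOn f s)
    {k : ℕ} (hk : ∀ x ∈ s, #(univ.image (f x)) = k) (j : ι) :
    ∃ I : Finset ι, ∀ x ∈ s, univ.filter (fun i => f x i = f x j) = I := by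
  refine exists_forall_eq_of_eventually_eq hs fun x hx => ?_
  filter_upwards [eventually_factorsThrough_of_tendsto (hf x hx), self_mem_nhdsWithin]
    with y hxy hy
  exact filter_eq_of_factorsThrough_of_card_image_le hxy ((hk y hy).trans (hk x hx).symm).le j

end LocallyConstant

section Roots

variable {R : Type*} [CommRing R] [IsDomain R]

lemma roots_prod_univ_X_sub_C {ι : Type*} [Fintype ι] (f : ι → R) :
    (∏ i, (X - C (f i))).roots = univ.val.map f := by
  simpa [Multiset.map_map] using roots_multiset_prod_X_sub_C (univ.val.map f)

lemma eq_of_monotone_of_prod_X_sub_C_eq [PartialOrder R] {m : ℕ} {f g : Fin m → R}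
    (hf : Monotone f) (hg : Monotone g) (h : ∏ i, (X - C (f i)) = ∏ i, (X - C (g i))) :
    f = g := by
  have hroots := congrArg roots h
  rw [roots_prod_univ_X_sub_C, roots_prod_univ_X_sub_C, Fin.univ_val_map, Fin.univ_val_map,
    Multiset.coe_eq_coe] at hroots
  exact List.ofFn_injective (hroots.eq_of_sortedLE hf.sortedLE_ofFn hg.sortedLE_ofFn)

lemma eq_prod_X_sub_C_of_card_le_rootMultiplicity [DecidableEq R] {ι : Type*} [Fintype ι]
    {p : R[X]} (hp : p.Monic) (hdeg : p.natDegree = Fintype.card ι) {f : ι → R}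
    (hf : ∀ j, #{i | f i = f j} ≤ p.rootMultiplicity (f j)) : p = ∏ i, (X - C (f i)) := by
  have hle : univ.val.map f ≤ p.roots := by
    refine Multiset.le_iff_count.2 fun a => ?_
    rw [count_roots, Multiset.count_map]
    by_cases ha : ∃ j, f j = a
    · obtain ⟨j, rfl⟩ := ha
      simpa only [card_def, filter_val, eq_comm] using hf j
    · push Not at ha
      simp [fun i => (ha i).symm]
  have hdvd : ∏ i, (X - C (f i)) ∣ p := by
    simpa [Multiset.map_map] using (Multiset.prod_X_sub_C_dvd_iff_le_roots hp.ne_zero _).2 hle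
  refine eq_of_monic_of_dvd_of_natDegree_le (monic_prod_X_sub_C f univ) hp hdvd ?_
  rw [natDegree_finsetProd_X_sub_C_eq_card, hdeg, card_univ]

end Roots

section Charpoly

variable {ι κ : Type*} [Fintype ι] [DecidableEq ι] [Fintype κ]

lemma le_rootMultiplicity_charpoly_of_isIdempotentElem {K : Type*} [Field K] [CharZero K]
    {A P : Matrix ι ι K} {μ : K} {d : ℕ} (hP : IsIdempotentElem P) (hAP : A * P = μ • P)
    (htr : P.trace = d) : d ≤ A.charpoly.rootMultiplicity μ := by
  have hproj := LinearMap.IsIdempotentElem.isProj_range P.toLin'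
    (hP.map Matrix.toLinAlgEquiv')
  have hrank : Module.finrank K P.toLin'.range = d := by
    have := hproj.trace
    rw [Matrix.trace_toLin'_eq, htr] at this
    exact_mod_cast this.symm
  have hrange : P.toLin'.range ≤ Module.End.eigenspace A.toLin' μ := by
    rintro _ ⟨v, rfl⟩
    rw [Module.End.mem_eigenspace_iff]
    simp [hAP, Matrix.smul_mulVec]
  calc d = Module.finrank K P.toLin'.range := hrank.symm
    _ ≤ Module.finrank K (Module.End.eigenspace A.toLin' μ) := Submodule.finrank_mono hrange
    _ ≤ A.toLin'.charpoly.rootMultiplicity μ := LinearMap.finrank_eigenspace_le _ _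
    _ = A.charpoly.rootMultiplicity μ := by rw [Matrix.charpoly_toLin']

lemma norm_le_sum_norm_of_isRoot_charpoly {K : Type*} [NormedField K] {A : Matrix ι ι K} {μ : K}
    (hμ : A.charpoly.IsRoot μ) : ‖μ‖ ≤ ∑ i, ∑ j, ‖A i j‖ := by
  rw [← Matrix.charpoly_toLin', ← Module.End.hasEigenvalue_iff_isRoot_charpoly] at hμ
  obtain ⟨k, hk⟩ := eigenvalue_mem_ball hμ
  calc ‖μ‖ ≤ ‖A k k‖ + ‖μ - A k k‖ := norm_le_norm_add_norm_sub' _ _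
    _ ≤ ‖A k k‖ + ∑ j ∈ univ.erase k, ‖A k j‖ := by grw [mem_closedBall_iff_norm.1 hk]
    _ = ∑ j, ‖A k j‖ := add_sum_erase _ (fun j => ‖A k j‖) (mem_univ k)
    _ ≤ ∑ i, ∑ j, ‖A i j‖ :=
      single_le_sum (f := fun i => ∑ j, ‖A i j‖) (fun i _ => by positivity) (mem_univ k)

lemma norm_le_sum_norm_of_charpoly_eq_prod_X_sub_C {K : Type*} [NormedField K]
    {A : Matrix ι ι K} {f : κ → K} (hf : A.charpoly = ∏ i, (X - C (f i))) :
    ‖f‖ ≤ ∑ i, ∑ j, ‖A i j‖ := by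
  refine (pi_norm_le_iff_of_nonneg (by positivity)).2 fun i =>
    norm_le_sum_norm_of_isRoot_charpoly ?_
  rw [hf, IsRoot, eval_prod]
  exact prod_eq_zero (mem_univ i) (by simp)

lemma isClosed_setOf_charpoly_eq_prod_X_sub_C {R : Type*} [CommRing R] [IsDomain R] [Infinite R]
    [TopologicalSpace R] [IsTopologicalRing R] [T2Space R] :
    IsClosed {p : Matrix ι ι R × (κ → R) | p.1.charpoly = ∏ i, (X - C (p.2 i))} := by
  have hset : {p : Matrix ι ι R × (κ → R) | p.1.charpoly = ∏ i, (X - C (p.2 i))} =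
      ⋂ t : R, {p | (Matrix.scalar ι t - p.1).det = ∏ i, (t - p.2 i)} := by
    ext p
    have hfunext : p.1.charpoly = ∏ i, (X - C (p.2 i)) ↔
        ∀ t, p.1.charpoly.eval t = (∏ i, (X - C (p.2 i))).eval t :=
      ⟨fun h t => congrArg (eval t) h, Polynomial.funext⟩
    simp [hfunext, Matrix.eval_charpoly, eval_prod]
  rw [hset]
  exact isClosed_iInter fun t => isClosed_eq (by fun_prop) (by fun_prop)

end Charpoly

/-- `f` lists the eigenvalues of `A` in nondecreasing order, repeated according to their algebraic
multiplicity; in particular `A.charpoly` splits over `R`. This singles out the eigenvalue functions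
without reference to eigenprojections. -/
structure IsOrderedSpectrum {ι R : Type*} [Fintype ι] [DecidableEq ι] [CommRing R] [Preorder R]
    {m : ℕ} (A : Matrix ι ι R) (f : Fin m → R) : Prop where
  monotone : Monotone f
  charpoly_eq : A.charpoly = ∏ i, (X - C (f i))

namespace IsOrderedSpectrum

variable {X ι : Type*} [Fintype ι] [DecidableEq ι] {m : ℕ}

lemma unique {R : Type*} [CommRing R] [IsDomain R] [PartialOrder R] {A : Matrix ι ι R}
    {f g : Fin m → R} (hf : IsOrderedSpectrum A f) (hg : IsOrderedSpectrum A g) : f = g :=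
  eq_of_monotone_of_prod_X_sub_C_eq hf.monotone hg.monotone
    (hf.charpoly_eq.symm.trans hg.charpoly_eq)

lemma of_isIdempotentElem {K : Type*} [Field K] [CharZero K] [Preorder K] [DecidableEq K]
    {A : Matrix (Fin m) (Fin m) K} {f : Fin m → K} {P : Fin m → Matrix (Fin m) (Fin m) K}
    (hf : Monotone f) (hP : ∀ j, IsIdempotentElem (P j)) (hAP : ∀ j, A * P j = f j • P j)
    (htr : ∀ j, (P j).trace = #{i | f i = f j}) : IsOrderedSpectrum A f where
  monotone := hf
  charpoly_eq := eq_prod_X_sub_C_of_card_le_rootMultiplicity A.charpoly_monic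
    A.charpoly_natDegree_eq_dim fun j =>
      le_rootMultiplicity_charpoly_of_isIdempotentElem (hP j) (hAP j) (htr j)

lemma isClosed_setOf {R : Type*} [CommRing R] [IsDomain R] [Infinite R] [Preorder R]
    [TopologicalSpace R] [IsTopologicalRing R] [T2Space R] [OrderClosedTopology R] :
    IsClosed {p : Matrix ι ι R × (Fin m → R) | IsOrderedSpectrum p.1 p.2} := by
  have hset : {p : Matrix ι ι R × (Fin m → R) | IsOrderedSpectrum p.1 p.2} =
      Prod.snd ⁻¹' {f | Monotone f} ∩ {p | p.1.charpoly = ∏ i, (X - C (p.2 i))} :=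
    Set.ext fun _ => ⟨fun h => ⟨h.monotone, h.charpoly_eq⟩, fun h => ⟨h.1, h.2⟩⟩
  rw [hset]
  exact (isClosed_monotone.preimage continuous_snd).inter isClosed_setOf_charpoly_eq_prod_X_sub_C

lemma tendsto {l : Filter X} {A : X → Matrix ι ι ℝ} {A₀ : Matrix ι ι ℝ} {f : X → Fin m → ℝ}
    {f₀ : Fin m → ℝ} (hf : ∀ᶠ x in l, IsOrderedSpectrum (A x) (f x))
    (hf₀ : IsOrderedSpectrum A₀ f₀) (hA : Tendsto A l (𝓝 A₀)) : Tendsto f l (𝓝 f₀) := by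
  have hbound : ∃ r, ∀ᶠ x in l, ‖f x‖ ≤ r := by
    have hsum : Continuous fun B : Matrix ι ι ℝ => ∑ i, ∑ j, ‖B i j‖ := by fun_prop
    refine ⟨(∑ i, ∑ j, ‖A₀ i j‖) + 1, ?_⟩
    filter_upwards [hf, ((hsum.tendsto A₀).comp hA).eventually_le_const (lt_add_one _)]
      with x hfx hAx
    exact (norm_le_sum_norm_of_charpoly_eq_prod_X_sub_C hfx.charpoly_eq).trans hAx
  obtain ⟨r, hr⟩ := hbound
  refine (isCompact_closedBall (0 : Fin m → ℝ) r).tendsto_nhds_of_unique_mapClusterPt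
    (by simpa using hr) fun y _ hy => ?_
  obtain ⟨U, hUl, hUy⟩ := mapClusterPt_iff_ultrafilter.1 hy
  have hlim := (hA.mono_left hUl).prodMk_nhds hUy
  have hy_spec : IsOrderedSpectrum A₀ y := isClosed_setOf.mem_of_tendsto hlim (hUl hf)
  exact hy_spec.unique hf₀

lemma continuousOn [TopologicalSpace X] {s : Set X} {A : X → Matrix ι ι ℝ} {f : X → Fin m → ℝ}
    (hf : ∀ x ∈ s, IsOrderedSpectrum (A x) (f x)) (hA : ContinuousOn A s) : ContinuousOn f s :=
  fun x hx => tendsto (eventually_mem_nhdsWithin.mono hf) (hf x hx) (hA x hx)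

end IsOrderedSpectrum

theorem constancy_of_multiplicities_and_indexes_general {E ι : Type*} [TopologicalSpace E]
    [Fintype ι] [DecidableEq ι] {m : ℕ} {Ω : Set E} (hΩ : IsPreconnected Ω)
    {H : E → Matrix ι ι ℝ} (hH : ContinuousOn H Ω) {lam : Fin m → E → ℝ}
    (hlam : ∀ x ∈ Ω, IsOrderedSpectrum (H x) fun i => lam i x) :
    ((∃ s : ℕ, ∀ x ∈ Ω, (univ.image fun i => lam i x).card = s) →
      ∀ j : Fin m, ∃ c : ℕ, ∀ x ∈ Ω, (univ.filter fun i => lam i x = lam j x).card = c) ∧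
    (∀ j : Fin m,
      (∃ c : ℕ, ∀ x ∈ Ω, (univ.filter fun i => lam i x = lam j x).card = c) →
        (∃ c₁ : ℕ, ∀ x ∈ Ω, sInf {i : ℕ | ∃ h : i < m, lam ⟨i, h⟩ x = lam j x} = c₁) ∧
        (∃ c₂ : ℕ, ∀ x ∈ Ω, sSup {i : ℕ | ∃ h : i < m, lam ⟨i, h⟩ x = lam j x} = c₂)) := by
  have hcont : ContinuousOn (fun x i => lam i x) Ω := IsOrderedSpectrum.continuousOn hlam hH
  constructor
  · rintro ⟨s, hs⟩ j
    obtain ⟨I, hI⟩ := exists_filter_eq_of_card_image_eq hΩ hcont hs j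
    exact ⟨#I, fun x hx => congrArg card (hI x hx)⟩
  · rintro j ⟨d, hd⟩
    obtain ⟨I, hI⟩ := exists_filter_eq_of_card_filter_eq hΩ hcont j hd
    have hindex : ∀ x ∈ Ω, {i : ℕ | ∃ h : i < m, lam ⟨i, h⟩ x = lam j x} =
        {i : ℕ | ∃ h : i < m, ⟨i, h⟩ ∈ I} := fun x hx => by simp [← hI x hx]
    exact ⟨⟨_, fun x hx => congrArg sInf (hindex x hx)⟩,
      ⟨_, fun x hx => congrArg sSup (hindex x hx)⟩⟩

theorem constancy_of_multiplicities_and_indexes {n m : ℕ}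
    (Ω : Set (EuclideanSpace ℝ (Fin n))) (hΩo : IsOpen Ω) (hΩc : IsConnected Ω)
    (H : EuclideanSpace ℝ (Fin n) → Matrix (Fin m) (Fin m) ℝ)
    (lam : Fin m → EuclideanSpace ℝ (Fin n) → ℝ)
    (P : Fin m → EuclideanSpace ℝ (Fin n) → Matrix (Fin m) (Fin m) ℝ)
    (hsymm : ∀ x ∈ Ω, (H x).IsSymm)
    (hmono : ∀ x ∈ Ω, Monotone fun i => lam i x)
    (hPsymm : ∀ (j : Fin m) (x), x ∈ Ω → (P j x).IsSymm)
    (hPidem : ∀ (j : Fin m) (x), x ∈ Ω → P j x * P j x = P j x)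
    (hHP : ∀ (j : Fin m) (x), x ∈ Ω → H x * P j x = lam j x • P j x)
    (htr : ∀ (j : Fin m) (x), x ∈ Ω →
      (P j x).trace = ((Finset.univ.filter fun i => lam i x = lam j x).card : ℝ))
    (hPeq : ∀ (i j : Fin m) (x), x ∈ Ω → lam i x = lam j x → P i x = P j x)
    (hPorth : ∀ (i j : Fin m) (x), x ∈ Ω → lam i x ≠ lam j x → P i x * P j x = 0)
    (hcompl : ∀ x ∈ Ω,
      ∑ i, ((Finset.univ.filter fun k => lam k x = lam i x).card : ℝ)⁻¹ • P i x = 1)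
    (hHc : ∀ i k, ContinuousOn (fun y => H y i k) Ω) :
    ((∃ s : ℕ, ∀ x ∈ Ω, (Finset.univ.image fun i => lam i x).card = s) →
      ∀ j : Fin m, ∃ c : ℕ, ∀ x ∈ Ω,
        (Finset.univ.filter fun i => lam i x = lam j x).card = c) ∧
    (∀ j : Fin m,
      (∃ c : ℕ, ∀ x ∈ Ω, (Finset.univ.filter fun i => lam i x = lam j x).card = c) →
        (∃ c₁ : ℕ, ∀ x ∈ Ω,
          sInf {i : ℕ | ∃ h : i < m, lam ⟨i, h⟩ x = lam j x} = c₁) ∧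
        (∃ c₂ : ℕ, ∀ x ∈ Ω,
          sSup {i : ℕ | ∃ h : i < m, lam ⟨i, h⟩ x = lam j x} = c₂)) :=
  constancy_of_multiplicities_and_indexes_general hΩc.isPreconnected
    (continuousOn_pi.2 fun i => continuousOn_pi.2 (hHc i)) fun x hx =>
      .of_isIdempotentElem (hmono x hx) (hPidem · x hx) (hHP · x hx) (htr · x hx)
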